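/- Let (G, sat) be an instance with strict cardinal preferences and let M be an ordinally stable fractional matching. Then for every agent y, letting x be the (unique) neighbor of y maximizing sat(y, ·), we have M(x, ≽ y) = 1; in particular, x is fully matched under M. -/

import Mathlib

/-!
If `y` likes `x` strictly better than every other neighbour, then `M(y, ≽ x) = M({x, y})`, while
`M({x, y}) ≤ M(x, ≽ y)` on every edge. Hence `M(x, ≽ y) < 1` would make `{x, y}` ordinally
blocking. So `1 ≤ M(x, ≽ y)`, and the degree bound at `x` forces equality.
-/

open Finset
open scoped Classical

variable {V : Type*}

/-- Two agents find each other acceptable iff at least one of them assigns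
positive satisfaction to the other. -/
def Adj (sat : V → V → ℚ) (u v : V) : Prop :=
  0 < sat u v ∨ 0 < sat v u

instance (sat : V → V → ℚ) (u v : V) : Decidable (Adj sat u v) :=
  inferInstanceAs (Decidable (0 < sat u v ∨ 0 < sat v u))

/-- `sat` describes a valid instance: satisfactions are nonnegative, an agent has
zero satisfaction towards itself, and the acceptability graph has no isolated vertices. -/
structure IsInstance [Fintype V] (sat : V → V → ℚ) : Prop where
  nonneg : ∀ u v, 0 ≤ sat u v
  sat_self : ∀ u, sat u u = 0
  noIsolated : ∀ v, ∃ u, Adj sat v u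

/-- `M` is a fractional matching of the acceptability graph of `sat`. -/
structure IsMatching [Fintype V] (sat : V → V → ℚ) (M : V → V → ℝ) : Prop where
  symm : ∀ u v, M u v = M v u
  nonneg : ∀ u v, 0 ≤ M u v
  support : ∀ u v, ¬ Adj sat u v → M u v = 0
  degree_le_one : ∀ v, ∑ u, M v u ≤ 1

/-- `M(x, ≽ y)`: total matching value of `x` with neighbours liked at least as much as `y`. -/
noncomputable def wge [Fintype V] (sat : V → V → ℚ) (M : V → V → ℝ) (x y : V) : ℝ :=
  ∑ z ∈ Finset.univ.filter (fun z => Adj sat x z ∧ sat x y ≤ sat x z), M x z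

/-- `M(x, ≻ y)`: total matching value of `x` with neighbours strictly preferred to `y`. -/
noncomputable def wgt [Fintype V] (sat : V → V → ℚ) (M : V → V → ℝ) (x y : V) : ℝ :=
  ∑ z ∈ Finset.univ.filter (fun z => Adj sat x z ∧ sat x y < sat x z), M x z

/-- Utility of agent `v` under matching `M`. -/
noncomputable def util [Fintype V] (sat : V → V → ℚ) (M : V → V → ℝ) (v : V) : ℝ :=
  ∑ u, (sat v u : ℝ) * M v u

/-- Social welfare of a matching. -/
noncomputable def welfare [Fintype V] (sat : V → V → ℚ) (M : V → V → ℝ) : ℝ :=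
  ∑ v, util sat M v

/-- Ordinal stability: no edge is ordinally blocking. -/
def OrdStable [Fintype V] (sat : V → V → ℚ) (M : V → V → ℝ) : Prop :=
  ∀ u v, Adj sat u v → ¬ (wge sat M u v < 1 ∧ wge sat M v u < 1)

/-- Cardinal stability: no edge is cardinally blocking. -/
def CardStable [Fintype V] (sat : V → V → ℚ) (M : V → V → ℝ) : Prop :=
  ∀ u v, Adj sat u v → ¬ (util sat M u < (sat u v : ℝ) ∧ util sat M v < (sat v u : ℝ))

/-- Linear stability: no edge is linearly blocking. -/
def LinStable [Fintype V] (sat : V → V → ℚ) (M : V → V → ℝ) : Prop :=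
  ∀ u v, Adj sat u v → ¬ (wge sat M u v + wge sat M v u - M u v < 1)

/-- Strict preferences: no ties among distinct neighbours. -/
def StrictPrefs (sat : V → V → ℚ) : Prop :=
  ∀ v x y, Adj sat v x → Adj sat v y → x ≠ y → sat v x ≠ sat v y

/-- The acceptability graph is bipartite with parts `U` and its complement. -/
def BipartiteWith (sat : V → V → ℚ) (U : Set V) : Prop :=
  ∀ u v, Adj sat u v → (u ∈ U ↔ v ∉ U)

/-- Integral matching. -/
def IntegralMatching (M : V → V → ℝ) : Prop := ∀ u v, M u v = 0 ∨ M u v = 1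

/-- Number of fully matched agents. -/
noncomputable def nfully [Fintype V] (M : V → V → ℝ) : ℕ :=
  (Finset.univ.filter (fun v => ∑ u, M v u = (1 : ℝ))).card

/-- `x` is a neighbour of `y` that `y` strictly prefers to all its other neighbours. This is
strictness of preferences localized at the top of the list of `y`: ties elsewhere are allowed. -/
structure IsUniqueFavourite (sat : V → V → ℚ) (y x : V) : Prop where
  adj : Adj sat y x
  lt : ∀ z, Adj sat y z → z ≠ x → sat y z < sat y x

theorem StrictPrefs.isUniqueFavourite {sat : V → V → ℚ} (hstrict : StrictPrefs sat) {y x : V}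
    (hyx : Adj sat y x) (hmax : ∀ z, Adj sat y z → sat y z ≤ sat y x) :
    IsUniqueFavourite sat y x where
  adj := hyx
  lt z hyz hzx := (hmax z hyz).lt_of_ne (hstrict y z x hyz hyx hzx)

theorem Adj.symm {sat : V → V → ℚ} {x y : V} (h : Adj sat x y) : Adj sat y x :=
  Or.symm h

section

variable [Fintype V] {sat : V → V → ℚ} {M : V → V → ℝ} {x y : V}

theorem IsUniqueFavourite.wge_eq (h : IsUniqueFavourite sat y x) : wge sat M y x = M y x := by
  refine Finset.sum_eq_single_of_mem x (by simp [h.adj]) fun z hz hzx => ?_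
  obtain ⟨hyz, hle⟩ := (Finset.mem_filter.mp hz).2
  exact absurd hle (h.lt z hyz hzx).not_ge

theorem IsMatching.le_wge (hM : IsMatching sat M) (hxy : Adj sat x y) :
    M x y ≤ wge sat M x y :=
  Finset.single_le_sum (f := M x) (fun z _ => hM.nonneg x z) (by simp [hxy])

theorem IsMatching.wge_le_sum (hM : IsMatching sat M) (x y : V) :
    wge sat M x y ≤ ∑ u, M x u :=
  Finset.sum_le_univ_sum_of_nonneg (hM.nonneg x)

theorem IsUniqueFavourite.wge_le_wge (h : IsUniqueFavourite sat y x) (hM : IsMatching sat M) :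
    wge sat M y x ≤ wge sat M x y :=
  calc
    wge sat M y x = M y x := h.wge_eq
    _ = M x y := hM.symm y x
    _ ≤ wge sat M x y := hM.le_wge h.adj.symm

theorem OrdStable.one_le_wge (hOS : OrdStable sat M) (hyx : Adj sat y x)
    (hle : wge sat M y x ≤ wge sat M x y) : 1 ≤ wge sat M x y :=
  not_lt.mp fun hlt => hOS y x hyx ⟨hle.trans_lt hlt, hlt⟩

theorem mostPreferred_neighbour_fullyMatched_general (hM : IsMatching sat M)
    (hOS : OrdStable sat M) (hfav : IsUniqueFavourite sat y x) :
    wge sat M x y = 1 ∧ ∑ u, M x u = 1 := by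
  have hone : 1 ≤ wge sat M x y := hOS.one_le_wge hfav.adj (hfav.wge_le_wge hM)
  have hsum : wge sat M x y ≤ ∑ u, M x u := hM.wge_le_sum x y
  have hdeg : ∑ u, M x u ≤ 1 := hM.degree_le_one x
  exact ⟨(hsum.trans hdeg).antisymm hone, hdeg.antisymm (hone.trans hsum)⟩

end

/-- under strict preferences, in an ordinally stable fractional matching,
for every agent `y`, the most preferred neighbour `x` of `y` satisfies `M(x, ≽ y) = 1`;
in particular `x` is fully matched. -/
theorem mostPreferred_neighbour_fullyMatched [Fintype V]
    (sat : V → V → ℚ) (hinst : IsInstance sat) (hstrict : StrictPrefs sat)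
    (M : V → V → ℝ) (hM : IsMatching sat M) (hOS : OrdStable sat M) :
    ∀ y x, Adj sat y x → (∀ z, Adj sat y z → sat y z ≤ sat y x) →
      wge sat M x y = 1 ∧ ∑ u, M x u = 1 :=
  fun _ _ hyx hmax =>
    mostPreferred_neighbour_fullyMatched_general hM hOS (hstrict.isUniqueFavourite hyx hmax)
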